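/- Dual discrete orthogonality of generalized Schur polynomials (Remark 3.3): for all λ̂, μ̂ ∈ Λ^{(m,n)}, Σ_{λ ∈ Λ^{(m,n)}} P_λ(x_λ̂^{(m,n)}) P_λ(x_μ̂^{(m,n)}) equals 1/W_λ̂ if μ̂ = λ̂ and 0 if μ̂ ≠ λ̂. -/

import Mathlib

open MeasureTheory Real Finset

noncomputable section

/-- Vandermonde product `∏_{j<k} (x_j - x_k)`. -/
def vand (n : ℕ) (x : Fin n → ℝ) : ℝ :=
  ∏ j : Fin n, ∏ k ∈ Finset.univ.filter (fun k => j < k), (x j - x k)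

/-- The determinant `det [p_{λ_j + n - j}(x_k)]_{1 ≤ j,k ≤ n}`. -/
def schurDet (n : ℕ) (p : ℕ → Polynomial ℝ) (lam : Fin n → ℕ) (x : Fin n → ℝ) : ℝ :=
  Matrix.det (Matrix.of fun j k : Fin n => (p (lam j + (n - 1 - (j : ℕ)))).eval (x k))

/-- The fundamental alcove `Λ^{(m,n)}` : decreasing sequences with entries ≤ m. -/
def Lam (m n : ℕ) : Finset (Fin n → ℕ) :=
  (Fintype.piFinset fun _ => Finset.range (m + 1)).filter
    fun lam => ∀ i j : Fin n, i ≤ j → lam j ≤ lam i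

/-- The node `x^{(m,n)}_λ̂` with `j`-th component `x^{(m+n)}_{λ̂_j + n - j}`. -/
def node (n : ℕ) (xr : ℕ → ℝ) (lh : Fin n → ℕ) : Fin n → ℝ :=
  fun j => xr (lh j + (n - 1 - (j : ℕ)))

/-- Christoffel weight `(∑_{k=0}^{N-1} p_k(x_ℓ)²)⁻¹`. -/
def chrW (p : ℕ → Polynomial ℝ) (N : ℕ) (xr : ℕ → ℝ) (l : ℕ) : ℝ :=
  (∑ k ∈ Finset.range N, ((p k).eval (xr l)) ^ 2)⁻¹

/-!
Gauss quadrature at the roots of `p_N` is exact in degree `< 2N`, so the matrix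
`E = [p_k(x_l)]_{k,l < N}` satisfies `E W Eᵀ = 1` with `W` diagonal. Hence `W Eᵀ E = 1` as well:
the Christoffel–Darboux kernel `Eᵀ E` is diagonal on the roots. By Cauchy–Binet the sum over `λ` of
products of two Schur determinants is a minor of `Eᵀ E`, and minors of a diagonal matrix on
distinct strictly decreasing index tuples vanish.
-/

open scoped Polynomial Matrix

section Sorting

theorem eq_of_strictAnti_of_range_subset {ι κ : Type*} [LinearOrder ι] [Finite ι] [Preorder κ]
    {f g : ι → κ} (hf : StrictAnti f) (hg : StrictAnti g) (hfg : Set.range f ⊆ Set.range g) :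
    f = g := by
  refine (hf.range_inj hg).1 (Set.eq_of_subset_of_ncard_le hfg ?_)
  rw [← Set.image_univ, ← Set.image_univ, Set.ncard_image_of_injective _ hf.injective,
    Set.ncard_image_of_injective _ hg.injective]

variable {n : ℕ} {κ : Type*} [LinearOrder κ]

theorem exists_perm_strictAnti_comp {f : Fin n → κ} (hf : Function.Injective f) :
    ∃ σ : Equiv.Perm (Fin n), StrictAnti (f ∘ σ) :=
  ⟨Fin.revPerm.trans (Tuple.sort f),
    ((Tuple.monotone_sort f).strictMono_of_injective
      (hf.comp (Tuple.sort f).injective)).comp_strictAnti Fin.rev_strictAnti⟩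

open scoped Classical in
theorem sum_injective_eq_sum_strictAnti_sum_perm [Fintype κ] {M : Type*} [AddCommMonoid M]
    (F : (Fin n → κ) → M) :
    ∑ f with Function.Injective f, F f
      = ∑ f : {f : Fin n → κ // StrictAnti f}, ∑ σ : Equiv.Perm (Fin n), F (f.1 ∘ σ) := by
  rw [← Fintype.sum_prod_type']
  symm
  refine Finset.sum_nbij (fun x => x.1.1 ∘ x.2) ?_ ?_ ?_ fun _ _ => rfl
  · rintro ⟨f, σ⟩ -
    simpa using f.2.injective
  · rintro ⟨⟨f, hf⟩, σ⟩ - ⟨⟨g, hg⟩, τ⟩ - (h : f ∘ σ = g ∘ τ)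
    have hfg : f = g := eq_of_strictAnti_of_range_subset hf hg <| by
      rw [← σ.surjective.range_comp f, h, τ.surjective.range_comp]
    subst hfg
    have hστ : σ = τ := Equiv.ext fun j => hf.injective (congrFun h j)
    rw [hστ]
  · intro f hf
    obtain ⟨σ, hσ⟩ := exists_perm_strictAnti_comp (by simpa using hf : Function.Injective f)
    exact ⟨(⟨f ∘ σ, hσ⟩, σ.symm), by simp, by ext j; simp⟩

end Sorting

section CauchyBinet

variable {R : Type*} [CommRing R]

theorem det_mul_eq_sum_prod_mul_det_submatrix {ι κ : Type*} [Fintype ι] [DecidableEq ι]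
    [Fintype κ] (A : Matrix ι κ R) (B : Matrix κ ι R) :
    (A * B).det = ∑ f : ι → κ, (∏ i, A i (f i)) * (B.submatrix f id).det := by
  have hrows : A * B = fun i => ∑ k, A i k • B k := by
    ext i j
    simp [Matrix.mul_apply]
  rw [hrows]
  refine (Matrix.detRowAlternating.toMultilinearMap.map_sum fun i k => A i k • B k).trans ?_
  exact Finset.sum_congr rfl fun f _ => MultilinearMap.map_smul_univ _ (fun i => A i (f i)) _

theorem sum_perm_prod_mul_det_submatrix {ι κ : Type*} [Fintype ι] [DecidableEq ι]
    (A : Matrix ι κ R) (B : Matrix κ ι R) (f : ι → κ) :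
    ∑ σ : Equiv.Perm ι, (∏ i, A i ((f ∘ σ) i)) * (B.submatrix (f ∘ σ) id).det
      = (A.submatrix id f).det * (B.submatrix f id).det := by
  rw [← Matrix.det_transpose (A.submatrix id f), Matrix.det_apply', Finset.sum_mul]
  refine Finset.sum_congr rfl fun σ _ => ?_
  have hsign : (B.submatrix (f ∘ σ) id).det = Equiv.Perm.sign σ * (B.submatrix f id).det :=
    Matrix.det_permute σ (B.submatrix f id)
  rw [hsign]
  simp only [Matrix.transpose_apply, Matrix.submatrix_apply, id_eq, Function.comp_apply]
  ring

open scoped Classical in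
theorem det_mul_eq_sum_strictAnti {n : ℕ} {κ : Type*} [LinearOrder κ] [Fintype κ]
    (A : Matrix (Fin n) κ R) (B : Matrix κ (Fin n) R) :
    (A * B).det = ∑ f : {f : Fin n → κ // StrictAnti f},
      (A.submatrix id f.1).det * (B.submatrix f.1 id).det := by
  have hrepeat : ∀ f : Fin n → κ, ¬ Function.Injective f →
      (∏ i, A i (f i)) * (B.submatrix f id).det = 0 := by
    intro f hf
    obtain ⟨i, j, hij, hne⟩ := Function.not_injective_iff.1 hf
    rw [Matrix.det_zero_of_row_eq hne (by ext k; simp [hij]), mul_zero]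
  calc (A * B).det
      = ∑ f : Fin n → κ, (∏ i, A i (f i)) * (B.submatrix f id).det :=
        det_mul_eq_sum_prod_mul_det_submatrix A B
    _ = ∑ f with Function.Injective f, (∏ i, A i (f i)) * (B.submatrix f id).det := by
        refine (Finset.sum_filter_of_ne fun f _ hf => ?_).symm
        exact not_imp_comm.1 (hrepeat f) hf
    _ = _ := by
        rw [sum_injective_eq_sum_strictAnti_sum_perm]
        exact Finset.sum_congr rfl fun f _ => sum_perm_prod_mul_det_submatrix A B f.1

theorem det_submatrix_diagonal_of_strictAnti {ι κ : Type*} [LinearOrder ι] [Fintype ι]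
    [Preorder κ] [DecidableEq κ] (d : κ → R) {f g : ι → κ} (hf : StrictAnti f) (hg : StrictAnti g) :
    ((Matrix.diagonal d).submatrix f g).det = if f = g then ∏ j, d (f j) else 0 := by
  split_ifs with hfg
  · subst hfg
    rw [Matrix.submatrix_diagonal d f hf.injective, Matrix.det_diagonal]
    rfl
  · obtain ⟨i, hi⟩ : ∃ i, f i ∉ Set.range g := by
      by_contra! hsub
      exact hfg (eq_of_strictAnti_of_range_subset hf hg (Set.range_subset_iff.2 hsub))
    refine Matrix.det_eq_zero_of_row_eq_zero i fun j => Matrix.diagonal_apply_ne d fun hij => ?_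
    exact hi ⟨j, hij.symm⟩

end CauchyBinet

section GaussQuadrature

variable {K : Type*} [Field K] (L : K[X] →ₗ[K] K)

theorem map_eq_sum_eval_mul_map_basis {ι : Type*} [Fintype ι] [DecidableEq ι] {x : ι → K}
    (hx : Function.Injective x) {f : K[X]} (hf : f.degree < Fintype.card ι) :
    L f = ∑ i, f.eval (x i) * L (Lagrange.basis univ x i) := by
  conv_lhs => rw [Lagrange.eq_interpolate (s := univ) hx.injOn hf, Lagrange.interpolate_apply]
  simp only [map_sum, ← Polynomial.smul_eq_C_mul, map_smul, smul_eq_mul]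

theorem gauss_quadrature {ι : Type*} [Fintype ι] [DecidableEq ι] {x : ι → K}
    (hx : Function.Injective x) {P : K[X]} (hP : P.degree = Fintype.card ι)
    (hroot : ∀ i, P.eval (x i) = 0)
    (horth : ∀ q : K[X], q.degree < Fintype.card ι → L (P * q) = 0)
    {f : K[X]} (hf : f.degree < Fintype.card ι + Fintype.card ι) :
    L f = ∑ i, f.eval (x i) * L (Lagrange.basis univ x i) := by
  have hP0 : P ≠ 0 := Polynomial.degree_ne_bot.1 (by simp [hP])
  have hquot : (f / P).degree < Fintype.card ι := by
    rcases lt_or_ge f.degree P.degree with hlt | hge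
    · rw [(Polynomial.div_eq_zero_iff hP0).2 hlt, Polynomial.degree_zero]
      exact WithBot.bot_lt_coe _
    · rw [← Polynomial.degree_add_div hP0 hge, hP] at hf
      exact lt_of_add_lt_add_left hf
  have hrem : (f % P).degree < Fintype.card ι := hP ▸ Polynomial.degree_mod_lt f hP0
  have heval : ∀ i, (f % P).eval (x i) = f.eval (x i) := fun i => by
    simpa [hroot i] using congrArg (Polynomial.eval (x i)) (EuclideanDomain.div_add_mod f P)
  calc L f = L (P * (f / P)) + L (f % P) := by rw [← map_add, EuclideanDomain.div_add_mod]
    _ = ∑ i, f.eval (x i) * L (Lagrange.basis univ x i) := by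
        rw [horth _ hquot, zero_add, map_eq_sum_eval_mul_map_basis L hx hrem]
        simp only [heval]

variable {L} {p : Polynomial.Sequence K}

theorem map_mul_eq_zero_of_degree_lt (horth : ∀ l k, L (p l * p k) = if l = k then 1 else 0)
    {N : ℕ} {q : K[X]} (hq : q.degree < N) : L (p N * q) = 0 := by
  have hspan : Submodule.span K (p '' Set.Iio N) = Polynomial.degreeLT K N :=
    p.span_degreeLT fun i _ => (Polynomial.leadingCoeff_ne_zero.2 (p.ne_zero i)).isUnit
  have hker : Submodule.span K (p '' Set.Iio N)
      ≤ LinearMap.ker (L ∘ₗ LinearMap.mulLeft K (p N)) := by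
    rw [Submodule.span_le]
    rintro _ ⟨l, hl, rfl⟩
    simpa [horth] using (Set.mem_Iio.1 hl).ne'
  exact hker (hspan ▸ Polynomial.mem_degreeLT.2 hq)

/-- The matrix `[p_k(x_l)]` of values of the first `N` members of a sequence of polynomials. Its
Gram matrix `(evalMatrix N p x)ᵀ * evalMatrix N p y` has as entries the Christoffel–Darboux kernel
`∑_{k < N} p_k(x_i) p_k(y_j)`. -/
def evalMatrix {κ : Type*} (N : ℕ) (p : ℕ → K[X]) (x : κ → K) : Matrix (Fin N) κ K :=
  Matrix.of fun k l => (p k).eval (x l)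

theorem evalMatrix_mul_diagonal_mul_transpose_eq_one
    (horth : ∀ l k, L (p l * p k) = if l = k then 1 else 0) {N : ℕ} {x : Fin N → K}
    (hx : Function.Injective x) (hroot : ∀ i, (p N).eval (x i) = 0) :
    evalMatrix N p x * Matrix.diagonal (fun i => L (Lagrange.basis univ x i))
      * (evalMatrix N p x)ᵀ = 1 := by
  ext k l
  have hdeg : (p k * p l).degree < Fintype.card (Fin N) + Fintype.card (Fin N) := by
    rw [Polynomial.degree_mul, p.degree_eq, p.degree_eq, Fintype.card_fin]
    exact_mod_cast add_lt_add k.2 l.2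
  have hquad : L (p k * p l)
      = ∑ i, (p k * p l).eval (x i) * L (Lagrange.basis univ x i) :=
    gauss_quadrature L hx (by simp) hroot
      (fun q hq => map_mul_eq_zero_of_degree_lt horth (by simpa using hq)) hdeg
  calc _ = ∑ i, (p k * p l).eval (x i) * L (Lagrange.basis univ x i) := by
        rw [Matrix.mul_apply]
        simp only [Matrix.mul_diagonal, Matrix.transpose_apply, evalMatrix, Matrix.of_apply,
          Polynomial.eval_mul, mul_right_comm]
    _ = (1 : Matrix (Fin N) (Fin N) K) k l := by
        rw [← hquad, horth, Matrix.one_apply]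
        simp only [Fin.val_inj]

theorem transpose_evalMatrix_mul_evalMatrix_eq_diagonal
    (horth : ∀ l k, L (p l * p k) = if l = k then 1 else 0) {N : ℕ} {x : Fin N → K}
    (hx : Function.Injective x) (hroot : ∀ i, (p N).eval (x i) = 0) :
    (evalMatrix N p x)ᵀ * evalMatrix N p x
      = Matrix.diagonal fun i => ∑ k ∈ Finset.range N, (p k).eval (x i) ^ 2 := by
  set E := evalMatrix N p x with hE
  have hdual : Matrix.diagonal (fun i => L (Lagrange.basis univ x i)) * (Eᵀ * E) = 1 := by
    rw [← Matrix.mul_assoc, mul_eq_one_comm, ← Matrix.mul_assoc]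
    exact evalMatrix_mul_diagonal_mul_transpose_eq_one horth hx hroot
  have hentry : ∀ i j, L (Lagrange.basis univ x i) * (Eᵀ * E) i j = if i = j then 1 else 0 := by
    intro i j
    rw [← Matrix.one_apply, ← hdual, Matrix.diagonal_mul]
  ext i j
  rcases eq_or_ne i j with rfl | hij
  · simp [hE, evalMatrix, Matrix.mul_apply, Finset.sum_range, pow_two]
  · have hweight : L (Lagrange.basis univ x i) ≠ 0 :=
      left_ne_zero_of_mul_eq_one (by simpa using hentry i i)
    rw [Matrix.diagonal_apply_ne _ hij]
    simpa [hij, hweight] using hentry i j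

end GaussQuadrature

section Alcove

variable {m n : ℕ}

theorem mem_Lam {lam : Fin n → ℕ} : lam ∈ Lam m n ↔ (∀ i, lam i ≤ m) ∧ Antitone lam := by
  simp [Lam, Antitone]

theorem antitone_add_val_of_strictAnti {g : Fin n → ℕ} (hg : StrictAnti g) :
    Antitone fun j : Fin n => g j + j := by
  cases n with
  | zero => exact fun i => i.elim0
  | succ n =>
    refine Fin.antitone_iff_succ_le.2 fun i => ?_
    have := hg i.castSucc_lt_succ
    simp only [Fin.val_succ, Fin.val_castSucc]
    lia

theorem le_add_val_of_strictAnti {g : Fin n → ℕ} (hg : StrictAnti g) (j : Fin n) :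
    n - 1 ≤ g j + j := by
  let last : Fin n := ⟨n - 1, Nat.sub_one_lt_of_lt j.2⟩
  have hlast : g last + (n - 1) ≤ g j + j :=
    antitone_add_val_of_strictAnti hg (Fin.le_def.2 (by lia))
  lia

theorem add_val_lt_of_strictAnti {N : ℕ} {g : Fin n → Fin N} (hg : StrictAnti g) (j : Fin n) :
    (g j : ℕ) + j < N := by
  let first : Fin n := ⟨0, j.pos⟩
  have hfirst : (g j : ℕ) + j ≤ g first + 0 :=
    antitone_add_val_of_strictAnti (Fin.val_strictMono.comp_strictAnti hg)
      (Fin.le_def.2 j.1.zero_le)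
  lia

theorem add_staircase_lt_of_mem_Lam {lam : Fin n → ℕ} (hlam : lam ∈ Lam m n) (j : Fin n) :
    lam j + (n - 1 - j) < m + n := by
  have := (mem_Lam.1 hlam).1 j
  lia

theorem strictAnti_add_staircase_of_mem_Lam {lam : Fin n → ℕ} (hlam : lam ∈ Lam m n) :
    StrictAnti fun j : Fin n => lam j + (n - 1 - j) := by
  intro i j hij
  have := (mem_Lam.1 hlam).2 hij.le
  simp only [Fin.lt_def] at hij ⊢
  lia

theorem sub_staircase_mem_Lam_of_strictAnti {f : Fin n → Fin (m + n)} (hf : StrictAnti f) :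
    (fun j : Fin n => (f j : ℕ) - (n - 1 - j)) ∈ Lam m n := by
  refine mem_Lam.2 ⟨fun j => ?_, fun i j hij => ?_⟩
  · have := add_val_lt_of_strictAnti hf j
    lia
  · have : (f j : ℕ) + j ≤ f i + i :=
      antitone_add_val_of_strictAnti (Fin.val_strictMono.comp_strictAnti hf) hij
    lia

/-- The bijection `λ ↦ λ + δ`, `δ = (n - 1, …, 1, 0)`, from the alcove `Λ^{(m,n)}` onto the strictly
decreasing `n`-tuples of indices below `m + n`. The truncated subtractions are exact: `j ≤ n - 1`
always, and `n - 1 - j ≤ f j` for strictly decreasing `f`. -/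
def alcoveEquiv (m n : ℕ) : Lam m n ≃ {f : Fin n → Fin (m + n) // StrictAnti f} where
  toFun lam := ⟨fun j => ⟨lam.1 j + (n - 1 - j), add_staircase_lt_of_mem_Lam lam.2 j⟩,
    fun _ _ hij => strictAnti_add_staircase_of_mem_Lam lam.2 hij⟩
  invFun f := ⟨fun j => f.1 j - (n - 1 - j), sub_staircase_mem_Lam_of_strictAnti f.2⟩
  left_inv lam := by simp
  right_inv f := by
    ext j
    exact Nat.sub_add_cancel <| Nat.sub_le_of_le_add <|
      le_add_val_of_strictAnti (Fin.val_strictMono.comp_strictAnti f.2) j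

end Alcove

section Moments

variable {μ : Measure ℝ} {w : ℝ → ℝ}

theorem integrable_eval_mul_of_moments (hmom : ∀ l : ℕ, Integrable (fun x => x ^ l * w x) μ)
    (q : ℝ[X]) : Integrable (fun x => q.eval x * w x) μ := by
  induction q using Polynomial.induction_on' with
  | add r s hr hs =>
    simp only [Polynomial.eval_add, add_mul]
    exact hr.add hs
  | monomial l c =>
    simp only [Polynomial.eval_monomial, mul_assoc]
    exact (hmom l).const_mul c

/-- The moment functional `q ↦ ∫ q w dμ` on polynomials. -/
def momentFunctional (hmom : ∀ l : ℕ, Integrable (fun x => x ^ l * w x) μ) : ℝ[X] →ₗ[ℝ] ℝ where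
  toFun q := ∫ x, q.eval x * w x ∂μ
  map_add' r s := by
    simp only [Polynomial.eval_add, add_mul]
    exact integral_add (integrable_eval_mul_of_moments hmom r)
      (integrable_eval_mul_of_moments hmom s)
  map_smul' c q := by
    simp only [Polynomial.eval_smul, smul_eq_mul, mul_assoc, RingHom.id_apply]
    exact integral_const_mul c _

theorem momentFunctional_apply (hmom : ∀ l : ℕ, Integrable (fun x => x ^ l * w x) μ) (q : ℝ[X]) :
    momentFunctional hmom q = ∫ x, q.eval x * w x ∂μ :=
  rfl

end Moments

section SchurDeterminants

variable {m n : ℕ}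

theorem vand_ne_zero {x : Fin n → ℝ} (hx : Function.Injective x) : vand n x ≠ 0 := by
  refine Finset.prod_ne_zero_iff.2 fun j _ => Finset.prod_ne_zero_iff.2 fun k hk => ?_
  exact sub_ne_zero.2 (hx.ne (Finset.mem_filter.1 hk).2.ne)

theorem sum_schurDet_mul_schurDet (p : ℕ → ℝ[X]) (y z : Fin n → ℝ) :
    ∑ lam ∈ Lam m n, schurDet n p lam y * schurDet n p lam z
      = ((evalMatrix (m + n) p y)ᵀ * evalMatrix (m + n) p z).det := by
  classical
  rw [det_mul_eq_sum_strictAnti, ← (alcoveEquiv m n).sum_comp, ← Finset.sum_coe_sort]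
  refine Finset.sum_congr rfl fun lam _ => ?_
  rw [← Matrix.transpose_submatrix, Matrix.det_transpose]
  rfl

theorem sum_schurDet_node_mul_schurDet_node {L : ℝ[X] →ₗ[ℝ] ℝ} {p : Polynomial.Sequence ℝ}
    (horth : ∀ l k, L (p l * p k) = if l = k then 1 else 0) {xr : ℕ → ℝ}
    (hinj : Set.InjOn xr (Set.Iio (m + n))) (hroot : ∀ l < m + n, (p (m + n)).eval (xr l) = 0)
    (lh mh : Lam m n) :
    ∑ lam ∈ Lam m n, schurDet n p lam (node n xr lh) * schurDet n p lam (node n xr mh)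
      = if mh.1 = lh.1 then ∏ j : Fin n, (chrW p (m + n) xr (lh.1 j + (n - 1 - (j : ℕ))))⁻¹
        else 0 := by
  set x : Fin (m + n) → ℝ := fun i => xr i
  set f := alcoveEquiv m n lh with hf
  set g := alcoveEquiv m n mh with hg
  have hx : Function.Injective x := fun i j hij => Fin.ext (hinj i.2 j.2 hij)
  have hkernel : (evalMatrix (m + n) p (node n xr lh))ᵀ * evalMatrix (m + n) p (node n xr mh)
      = ((evalMatrix (m + n) p x)ᵀ * evalMatrix (m + n) p x).submatrix f.1 g.1 := rfl
  rw [sum_schurDet_mul_schurDet, hkernel,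
    transpose_evalMatrix_mul_evalMatrix_eq_diagonal horth hx fun i => hroot i i.2,
    det_submatrix_diagonal_of_strictAnti _ f.2 g.2]
  simp only [hf, hg, Subtype.val_inj, EmbeddingLike.apply_eq_iff_eq, eq_comm (a := mh), chrW,
    inv_inv]
  rfl

theorem node_injective {xr : ℕ → ℝ} (hinj : Set.InjOn xr (Set.Iio (m + n))) (lh : Lam m n) :
    Function.Injective (node n xr lh) := fun i j hij =>
  (alcoveEquiv m n lh).2.injective <|
    Fin.ext (hinj ((alcoveEquiv m n lh).1 i).2 ((alcoveEquiv m n lh).1 j).2 hij)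

theorem generalized_schur_dual_discrete_orthogonality_general
    (L : ℝ[X] →ₗ[ℝ] ℝ) (p : Polynomial.Sequence ℝ)
    (horth : ∀ l k, L (p l * p k) = if l = k then 1 else 0)
    (xr : ℕ → ℝ) (hinj : Set.InjOn xr (Set.Iio (m + n)))
    (hroot : ∀ l < m + n, (p (m + n)).eval (xr l) = 0)
    (P : (Fin n → ℕ) → (Fin n → ℝ) → ℝ)
    (hPdet : ∀ lam x, vand n x * P lam x = schurDet n p lam x)
    (lh mh : Fin n → ℕ) (hlh : lh ∈ Lam m n) (hmh : mh ∈ Lam m n) :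
    ∑ lam ∈ Lam m n, P lam (node n xr lh) * P lam (node n xr mh)
      = if mh = lh then
          (vand n (node n xr lh) ^ 2 *
            ∏ j : Fin n, chrW p (m + n) xr (lh j + (n - 1 - (j : ℕ))))⁻¹
        else 0 := by
  lift lh to Lam m n using hlh
  lift mh to Lam m n using hmh
  have hvand (nu : Lam m n) : vand n (node n xr nu) ≠ 0 := vand_ne_zero (node_injective hinj nu)
  have hP (lam) (nu : Lam m n) :
      P lam (node n xr nu) = schurDet n p lam (node n xr nu) / vand n (node n xr nu) := by
    rw [← hPdet, mul_div_cancel_left₀ _ (hvand nu)]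
  simp only [hP, div_mul_div_comm, ← Finset.sum_div]
  rw [sum_schurDet_node_mul_schurDet_node horth hinj hroot]
  split_ifs with h
  · rw [h, Finset.prod_inv_distrib, mul_inv, pow_two, div_eq_inv_mul]
  · exact zero_div _

end SchurDeterminants

theorem generalized_schur_dual_discrete_orthogonality
    (n : ℕ) (hn : 0 < n) (m : ℕ)
    (a b : ℝ) (hab : a < b)
    (w : ℝ → ℝ)
    (hw_cont : ContinuousOn w (Set.Ioo a b))
    (hw_pos : ∀ x ∈ Set.Ioo a b, 0 < w x)
    (hw_mom : ∀ l : ℕ, IntegrableOn (fun x => x ^ l * w x) (Set.Ioo a b))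
    -- the orthonormal polynomials for the weight w
    (p : ℕ → Polynomial ℝ)
    (hdeg : ∀ l, (p l).degree = l)
    (hlead : ∀ l, 0 < (p l).leadingCoeff)
    (horth : ∀ l k, (∫ x in Set.Ioo a b, (p l).eval x * (p k).eval x * w x)
      = if l = k then 1 else 0)
    -- the ordered roots of p_{m+n} in (a,b)
    (xr : ℕ → ℝ)
    (hxr_mem : ∀ l < m + n, xr l ∈ Set.Ioo a b)
    (hxr_mono : ∀ k l : ℕ, k < l → l < m + n → xr k < xr l)
    (hxr_root : ∀ l < m + n, (p (m + n)).eval (xr l) = 0)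
    -- the generalized Schur polynomials
    (P : (Fin n → ℕ) → (Fin n → ℝ) → ℝ)
    (hPcont : ∀ lam, Continuous (P lam))
    (hPdet : ∀ lam x, vand n x * P lam x = schurDet n p lam x)
    (lh mh : Fin n → ℕ)
    (hlh : lh ∈ Lam m n) (hmh : mh ∈ Lam m n) :
    (∑ lam ∈ Lam m n, P lam (node n xr lh) * P lam (node n xr mh))
    = if mh = lh then
        (vand n (node n xr lh) ^ 2 *
          ∏ j : Fin n, chrW p (m + n) xr (lh j + (n - 1 - (j : ℕ))))⁻¹
      else 0 := by
  have hinj : Set.InjOn xr (Set.Iio (m + n)) :=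
    StrictMonoOn.injOn fun k _ l hl hkl => hxr_mono k l hkl hl
  exact generalized_schur_dual_discrete_orthogonality_general (momentFunctional hw_mom) ⟨p, hdeg⟩
    (fun l k => (momentFunctional_apply hw_mom _).trans <| by
      simpa only [Polynomial.eval_mul] using horth l k)
    xr hinj hxr_root P hPdet lh mh hlh hmh

end
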